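/- arXiv:1505.06812 — 12 statements merged into one kernel-verified Lean document; each statement's English description precedes it below -/
import Mathlib

section
/- Let Ψ : ℝ → ℝ → ℝ be coordinatewise monotone (u ≤ u' and v ≤ v' imply Ψ(u,v) ≤ Ψ(u',v')) and L-stable for some L ≥ 0, i.e. Ψ(u+ε, v+ε) ≤ Ψ(u,v) + L·ε for all u, v ∈ ℝ and all ε ≥ 0. Then for every pair (α, β) ∈ ℝ² with √(α² + β²) > L, the set {α·u + β·v − Ψ(u,v) : u, v ∈ ℝ} is not bounded below; equivalently the concave Fenchel conjugate Ψ*(α,β) = inf_{u,v ∈ ℝ} (α·u + β·v − Ψ(u,v)) equals −∞, so no dual vector of Euclidean norm greater than L can belong to the sufficient dual region of Ψ. -/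
/-- An affine function bounded below on the nonnegative ray has nonnegative slope. -/
theorem nonneg_of_forall_le_mul_add {a b m : ℝ} (h : ∀ t : ℝ, 0 ≤ t → m ≤ a * t + b) :
    0 ≤ a := by
  by_contra! ha
  have ht := h ((|m - b| + 1) / -a) (div_nonneg (by positivity) (by linarith))
  have hslope : a * ((|m - b| + 1) / -a) = -(|m - b| + 1) := by
    have := ha.ne
    field_simp
  linarith [neg_abs_le (m - b)]

/-- If `Ψ : ℝ → ℝ → ℝ` is coordinatewise monotone and `L`-stable
(`Ψ (u+ε) (v+ε) ≤ Ψ u v + L * ε` for all `ε ≥ 0`), then for any dual vector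
`(α, β)` with Euclidean norm `√(α² + β²) > L`, the set
`{α·u + β·v − Ψ u v : u, v ∈ ℝ}` is not bounded below, i.e. the concave
Fenchel conjugate `Ψ*(α, β) = −∞`. -/
theorem stmt_0 (Ψ : ℝ → ℝ → ℝ) (L : ℝ) (hL : 0 ≤ L)
    (hmono : ∀ u u' v v' : ℝ, u ≤ u' → v ≤ v' → Ψ u v ≤ Ψ u' v')
    (hstable : ∀ u v ε : ℝ, 0 ≤ ε → Ψ (u + ε) (v + ε) ≤ Ψ u v + L * ε)
    (α β : ℝ) (hαβ : Real.sqrt (α ^ 2 + β ^ 2) > L) :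
    ¬ BddBelow {x : ℝ | ∃ u v : ℝ, x = α * u + β * v - Ψ u v} := by
  rintro ⟨m, hm⟩
  have hbound (u v : ℝ) : m ≤ α * u + β * v - Ψ u v := hm ⟨u, v, rfl⟩
  have hα : 0 ≤ α := nonneg_of_forall_le_mul_add (m := m) (b := -Ψ 0 0) fun t ht => by
    linarith [hbound t 0, hmono 0 t 0 0 ht le_rfl]
  have hβ : 0 ≤ β := nonneg_of_forall_le_mul_add (m := m) (b := -Ψ 0 0) fun t ht => by
    linarith [hbound 0 t, hmono 0 0 0 t le_rfl ht]
  have hsum : 0 ≤ L - (α + β) :=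
    nonneg_of_forall_le_mul_add (m := m) (b := -Ψ 0 0) fun t ht => by
      have hst := hstable (-t) (-t) t ht
      rw [neg_add_cancel] at hst
      linarith [hbound (-t) (-t)]
  have hnorm : Real.sqrt (α ^ 2 + β ^ 2) ≤ α + β :=
    Real.sqrt_le_iff.mpr ⟨by positivity, by nlinarith [mul_nonneg hα hβ]⟩
  linarith
end

section
/- In the general pseudo-linear setting, fix v ∈ ℝ with v ≤ F*, and assume the set {V(w,v) : w ∈ W} is bounded above with e := sup_{w ∈ W} V(w,v) − v. Then e / (1 + f) ≥ F* − v, i.e. sup_{w ∈ W} V(w,v) − v ≥ (1 + f)·(F* − v). -/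
/-- In the general pseudo-linear setting, for `v ≤ F*`,
`sup_w V(w,v) − v ≥ (1 + f)·(F* − v)`. -/
theorem stmt_3 {W : Type*} [Nonempty W] (P N : W → ℝ) (c a b γ δ f g : ℝ)
    (hf : -1 < f) (hfg : f ≤ g)
    (hlow : ∀ w : W, f ≤ γ * P w + δ * N w)
    (hhigh : ∀ w : W, γ * P w + δ * N w ≤ g)
    (F : W → ℝ)
    (hF : ∀ w, F w = (c + a * P w + b * N w) / (1 + γ * P w + δ * N w))
    (V : W → ℝ → ℝ)
    (hV : ∀ w v, V w v = c + (a - v * γ) * P w + (b - v * δ) * N w)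
    (hFb : BddAbove (Set.range F))
    (v : ℝ) (hv : v ≤ sSup (Set.range F))
    (hVb : BddAbove (Set.range fun w => V w v)) :
    sSup (Set.range fun w => V w v) - v ≥ (1 + f) * (sSup (Set.range F) - v) := by
  have hf1 : 0 < 1 + f := by linarith
  have hg1 : 0 < 1 + g := by linarith
  have hD (w : W) : 0 < 1 + γ * P w + δ * N w := by linarith [hlow w]
  have hVF (w : W) : V w v - v = (F w - v) * (1 + γ * P w + δ * N w) := by
    rw [hV, sub_mul (F w), hF, div_mul_cancel₀ _ (hD w).ne']
    ring
  set S := sSup (Set.range fun w => V w v) - v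
  have hle (w : W) : (F w - v) * (1 + γ * P w + δ * N w) ≤ S := by
    have hw : V w v ≤ sSup (Set.range fun w => V w v) := le_csSup hVb ⟨w, rfl⟩
    linarith [hVF w]
  -- If `S` were negative, `F` would stay uniformly below `v`, against `v ≤ F*`.
  have hS0 : 0 ≤ S := by
    by_contra! hneg
    have hsup : sSup (Set.range F) ≤ v + S / (1 + g) := by
      refine csSup_le (Set.range_nonempty F) ?_
      rintro _ ⟨w, rfl⟩
      have hFv : F w - v < 0 := by
        by_contra! h
        linarith [hle w, mul_nonneg h (hD w).le]
      have hdiv : F w - v ≤ S / (1 + g) := by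
        rw [le_div_iff₀ hg1]
        nlinarith [hle w, hhigh w]
      linarith
    linarith [div_neg_of_neg_of_pos hneg hg1]
  have hsup : sSup (Set.range F) ≤ v + S / (1 + f) := by
    refine csSup_le (Set.range_nonempty F) ?_
    rintro _ ⟨w, rfl⟩
    rcases le_total (F w) v with h | h
    · linarith [div_nonneg hS0 hf1.le]
    · have hdiv : F w - v ≤ S / (1 + f) := by
        rw [le_div_iff₀ hf1]
        nlinarith [hle w, hlow w]
      linarith
  have hdiv : sSup (Set.range F) - v ≤ S / (1 + f) := by linarith
  rw [le_div_iff₀ hf1] at hdiv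
  linarith
end

section
/- (Convergence of the exact Alternate-Maximization procedure.) In the general pseudo-linear setting, let (wₜ)ₜ∈ℕ be a sequence in W such that for every t, setting vₜ = F(wₜ), the classifier w_{t+1} exactly maximizes the valuation at level vₜ: V(w_{t+1}, vₜ) = sup_{w ∈ W} V(w, vₜ) (in particular the supremum is attained at w_{t+1}). Let Δₜ = F* − F(wₜ) and η = (g − f)/(g + 1). Then 0 ≤ η < 1 and for all t ∈ ℕ, Δₜ ≤ Δ₀ · ηᵗ; in particular Δ_{t+1} ≤ η·Δₜ for every t. -/
/-- Convergence of the exact Alternate-Maximization procedure: if each `w (t+1)`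
exactly maximizes the valuation at level `v t = F (w t)`, then the excess error
`Δ t = F* − F (w t)` satisfies `Δ t ≤ Δ 0 · η ^ t` with
`η = (g − f)/(g + 1) ∈ [0, 1)`, and in particular `Δ (t+1) ≤ η · Δ t`. -/
theorem stmt_5 {W : Type*} [Nonempty W] (P N : W → ℝ) (c a b γ δ f g : ℝ)
    (hf : -1 < f) (hfg : f ≤ g)
    (hlow : ∀ w : W, f ≤ γ * P w + δ * N w)
    (hhigh : ∀ w : W, γ * P w + δ * N w ≤ g)
    (F : W → ℝ)
    (hF : ∀ w, F w = (c + a * P w + b * N w) / (1 + γ * P w + δ * N w))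
    (V : W → ℝ → ℝ)
    (hV : ∀ w v, V w v = c + (a - v * γ) * P w + (b - v * δ) * N w)
    (hFb : BddAbove (Set.range F))
    (w : ℕ → W)
    (hmax : ∀ t : ℕ,
      IsLUB (Set.range fun w' => V w' (F (w t))) (V (w (t + 1)) (F (w t)))) :
    (0 ≤ (g - f) / (g + 1) ∧ (g - f) / (g + 1) < 1) ∧
    (∀ t : ℕ, sSup (Set.range F) - F (w t) ≤
      (sSup (Set.range F) - F (w 0)) * ((g - f) / (g + 1)) ^ t) ∧
    (∀ t : ℕ, sSup (Set.range F) - F (w (t + 1)) ≤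
      (g - f) / (g + 1) * (sSup (Set.range F) - F (w t))) := by
  have hg : 0 < g + 1 := by linarith
  have hf' : 0 < 1 + f := by linarith
  have hη0 : 0 ≤ (g - f) / (g + 1) := div_nonneg (by linarith) hg.le
  have hη1 : (g - f) / (g + 1) < 1 := by rw [div_lt_one hg]; linarith
  have valuation_sub : ∀ x v, V x v - v = (F x - v) * (1 + γ * P x + δ * N x) := by
    intro x v
    have hD : 1 + γ * P x + δ * N x ≠ 0 := by have := hlow x; linarith
    rw [hV, sub_mul (F x), hF, div_mul_cancel₀ _ hD]
    ring
  have gain : ∀ t x, (F x - F (w t)) * (1 + γ * P x + δ * N x) ≤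
      (F (w (t + 1)) - F (w t)) * (1 + γ * P (w (t + 1)) + δ * N (w (t + 1))) := by
    intro t x
    rw [← valuation_sub, ← valuation_sub]
    exact sub_le_sub_right ((hmax t).1 ⟨x, rfl⟩) _
  have mono : ∀ t, F (w t) ≤ F (w (t + 1)) := by
    intro t
    have h := gain t (w t)
    rw [sub_self, zero_mul] at h
    have hD := hlow (w (t + 1))
    exact sub_nonneg.mp (nonneg_of_mul_nonneg_left h (by linarith))
  have contraction : ∀ t, sSup (Set.range F) - F (w (t + 1)) ≤
      (g - f) / (g + 1) * (sSup (Set.range F) - F (w t)) := by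
    intro t
    have hm := sub_nonneg.mpr (mono t)
    have hsup : sSup (Set.range F) ≤
        F (w t) + (F (w (t + 1)) - F (w t)) * (1 + g) / (1 + f) := by
      refine csSup_le (Set.range_nonempty F) ?_
      rintro _ ⟨x, rfl⟩
      rw [← sub_le_iff_le_add', le_div_iff₀ hf']
      rcases le_total (F x - F (w t)) 0 with hx | hx
      · exact (mul_nonpos_of_nonpos_of_nonneg hx hf'.le).trans
          (mul_nonneg hm (by linarith))
      · have hlx := hlow x
        have hux := hhigh (w (t + 1))
        exact (mul_le_mul_of_nonneg_left (by linarith) hx).trans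
          ((gain t x).trans (mul_le_mul_of_nonneg_left (by linarith) hm))
    rw [← sub_le_iff_le_add', le_div_iff₀ hf'] at hsup
    rw [div_mul_eq_mul_div, le_div_iff₀ hg]
    linarith
  refine ⟨⟨hη0, hη1⟩, fun t => ?_, contraction⟩
  induction t with
  | zero => simp
  | succ t ih =>
    calc sSup (Set.range F) - F (w (t + 1))
        ≤ (g - f) / (g + 1) * (sSup (Set.range F) - F (w t)) := contraction t
      _ ≤ (g - f) / (g + 1) *
          ((sSup (Set.range F) - F (w 0)) * ((g - f) / (g + 1)) ^ t) :=
        mul_le_mul_of_nonneg_left ih hη0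
      _ = (sSup (Set.range F) - F (w 0)) * ((g - f) / (g + 1)) ^ (t + 1) := by ring
end

section
/- (Alt-Max contraction rate for F_β-measure.) Let W be a nonempty set, let β₀ > 0 and θ > 0 be reals, let 0 < m < 1 + β₀²/θ, and let P, N : W → ℝ satisfy 0 ≤ P(w) ≤ m and 0 ≤ N(w) ≤ m for all w. Define F(w) = (1 + β₀²)·P(w) / (β₀² + θ + P(w) − θ·N(w)) (the canonical F_β-measure, whose denominator is positive under these conditions) and the valuation V(w,v) = [(1+β₀²)/(β₀²+θ) − v/(β₀²+θ)]·P(w) + [v·θ/(β₀²+θ)]·N(w). Assume F is bounded above with F* = sup_{w∈W} F(w). If w₀, w₁ ∈ W satisfy v = F(w₀) and V(w₁, v) = sup_{w ∈ W} V(w, v), then F* − F(w₁) ≤ [m·(1+θ)/(m + β₀² + θ)] · (F* − F(w₀)). -/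
/-- Alt-Max contraction rate for the F_β-measure: one exact alternate-maximization
step contracts the excess error by a factor `m(1+θ)/(m + β₀² + θ)`. -/
theorem stmt_6 {W : Type*} [Nonempty W] (β₀ θ m : ℝ)
    (hβ₀ : 0 < β₀) (hθ : 0 < θ) (hm : 0 < m) (hm' : m < 1 + β₀ ^ 2 / θ)
    (P N : W → ℝ)
    (hP : ∀ w, 0 ≤ P w ∧ P w ≤ m) (hN : ∀ w, 0 ≤ N w ∧ N w ≤ m)
    (F : W → ℝ)
    (hF : ∀ w, F w = (1 + β₀ ^ 2) * P w / (β₀ ^ 2 + θ + P w - θ * N w))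
    (V : W → ℝ → ℝ)
    (hV : ∀ w v, V w v = ((1 + β₀ ^ 2) / (β₀ ^ 2 + θ) - v / (β₀ ^ 2 + θ)) * P w
      + v * θ / (β₀ ^ 2 + θ) * N w)
    (hFb : BddAbove (Set.range F))
    (w₀ w₁ : W) (v : ℝ) (hv : v = F w₀)
    (hVb : BddAbove (Set.range fun w => V w v))
    (hmax : V w₁ v = sSup (Set.range fun w => V w v)) :
    sSup (Set.range F) - F w₁ ≤
      m * (1 + θ) / (m + β₀ ^ 2 + θ) * (sSup (Set.range F) - F w₀) := by
  have hL : 0 < β₀ ^ 2 + θ - θ * m := by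
    have h := mul_lt_mul_of_pos_left hm' hθ
    have h' : θ * (1 + β₀ ^ 2 / θ) = θ + β₀ ^ 2 := by field_simp
    linarith
  have hb : 0 < β₀ ^ 2 + θ := by positivity
  have hU : 0 < m + β₀ ^ 2 + θ := by positivity
  have hDL (w : W) : β₀ ^ 2 + θ - θ * m ≤ β₀ ^ 2 + θ + P w - θ * N w := by
    nlinarith [hP w, mul_le_mul_of_nonneg_left (hN w).2 hθ.le]
  have hDU (w : W) : β₀ ^ 2 + θ + P w - θ * N w ≤ m + β₀ ^ 2 + θ := by
    linarith [(hP w).2, mul_nonneg hθ.le (hN w).1]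
  have hVF (w : W) :
      (β₀ ^ 2 + θ) * (V w v - v) = (β₀ ^ 2 + θ + P w - θ * N w) * (F w - v) := by
    have hD : β₀ ^ 2 + θ + P w - θ * N w ≠ 0 := (hL.trans_le (hDL w)).ne'
    have hFD : (β₀ ^ 2 + θ + P w - θ * N w) * F w = (1 + β₀ ^ 2) * P w := by
      rw [hF w, mul_div_cancel₀ _ hD]
    have hVD : (β₀ ^ 2 + θ) * V w v = (1 + β₀ ^ 2 - v) * P w + v * θ * N w := by
      rw [hV w v]
      field_simp
    linear_combination hVD - hFD
  have hstep (w : W) : (β₀ ^ 2 + θ + P w - θ * N w) * (F w - v) ≤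
      (β₀ ^ 2 + θ + P w₁ - θ * N w₁) * (F w₁ - v) := by
    rw [← hVF, ← hVF, hmax]
    have := le_csSup hVb (Set.mem_range_self w)
    gcongr
  have hF₁ : 0 ≤ F w₁ - v := by
    have h := hstep w₀
    rw [← hv, sub_self, mul_zero] at h
    exact nonneg_of_mul_nonneg_right h (hL.trans_le (hDL w₁))
  have hbound (w : W) :
      (β₀ ^ 2 + θ - θ * m) * (F w - v) ≤ (m + β₀ ^ 2 + θ) * (F w₁ - v) := by
    rcases le_total (F w) v with hw | hw
    · exact (mul_nonpos_of_nonneg_of_nonpos hL.le (sub_nonpos.2 hw)).trans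
        (mul_nonneg hU.le hF₁)
    · exact (mul_le_mul_of_nonneg_right (hDL w) (sub_nonneg.2 hw)).trans
        ((hstep w).trans (mul_le_mul_of_nonneg_right (hDU w₁) hF₁))
  have hsup : sSup (Set.range F) ≤
      v + (m + β₀ ^ 2 + θ) * (F w₁ - v) / (β₀ ^ 2 + θ - θ * m) := by
    refine csSup_le (Set.range_nonempty F) ?_
    rintro _ ⟨w, rfl⟩
    rw [← sub_le_iff_le_add', le_div_iff₀' hL]
    exact hbound w
  rw [← sub_le_iff_le_add', le_div_iff₀' hL] at hsup
  rw [← hv, div_mul_eq_mul_div, le_div_iff₀ hU]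
  linarith
end

section
/- In the F1 setting, for every v ∈ ℝ: e(v) < 0 if and only if F* < v. That is, the best achievable excess valuation at level v is negative exactly when v is an illegitimate (unachievable) level exceeding the optimal F1 value. -/
/-- In the F1 setting, the best achievable excess valuation `e(v)` at level `v`
is negative exactly when `v` exceeds the optimal F1 value `F*`. -/
theorem stmt_8 {W : Type*} [Nonempty W] (m : ℝ) (hm : 0 < m) (hm' : m < 2)
    (P N : W → ℝ)
    (hP : ∀ w, 0 ≤ P w ∧ P w < m) (hN : ∀ w, 0 ≤ N w ∧ N w < m)
    (F : W → ℝ) (hF : ∀ w, F w = 2 * P w / (2 + P w - N w))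
    (V : W → ℝ → ℝ) (hV : ∀ w v, V w v = (1 - v / 2) * P w + v / 2 * N w)
    (hFb : BddAbove (Set.range F))
    (v : ℝ) (hVb : BddAbove (Set.range fun w => V w v)) :
    sSup (Set.range fun w => V w v) - v < 0 ↔ sSup (Set.range F) < v := by
  have excess_eq : ∀ w, V w v - v = (F w - v) * (1 + (P w - N w) / 2) := by
    intro w
    have hden : 2 + P w - N w ≠ 0 := by linarith [(hP w).1, (hN w).2]
    rw [hV, hF]
    field_simp
    ring
  constructor
  · intro h
    set e := sSup (Set.range fun w => V w v) - v with he
    have hle : sSup (Set.range F) ≤ v + e / 2 := by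
      refine csSup_le (Set.range_nonempty F) ?_
      rintro _ ⟨w, rfl⟩
      have hw : V w v ≤ e + v := by
        rw [he, sub_add_cancel]
        exact le_csSup hVb ⟨w, rfl⟩
      have hc : 0 < 1 + (P w - N w) / 2 := by linarith [(hP w).1, (hN w).2]
      have hc2 : 1 + (P w - N w) / 2 ≤ 2 := by linarith [(hP w).2, (hN w).1]
      by_contra! hlt
      have h1 : e / 2 * (1 + (P w - N w) / 2) < (F w - v) * (1 + (P w - N w) / 2) :=
        mul_lt_mul_of_pos_right (by linarith) hc
      have h2 : e / 2 * 2 ≤ e / 2 * (1 + (P w - N w) / 2) :=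
        mul_le_mul_of_nonpos_left hc2 (by linarith)
      linarith [excess_eq w]
    linarith
  · intro h
    set d := sSup (Set.range F) - v with hd
    have hd0 : d < 0 := by linarith
    have hle : sSup (Set.range fun w => V w v) ≤ v + d * (1 - m / 2) := by
      refine csSup_le (Set.range_nonempty _) ?_
      rintro _ ⟨w, rfl⟩
      have hw : F w - v ≤ d := sub_le_sub_right (le_csSup hFb ⟨w, rfl⟩) v
      have hc : 1 - m / 2 ≤ 1 + (P w - N w) / 2 := by linarith [(hP w).1, (hN w).2]
      have h1 : (F w - v) * (1 + (P w - N w) / 2) ≤ d * (1 + (P w - N w) / 2) :=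
        mul_le_mul_of_nonneg_right hw (by linarith)
      have h2 : d * (1 + (P w - N w) / 2) ≤ d * (1 - m / 2) :=
        mul_le_mul_of_nonpos_left hc hd0.le
      show V w v ≤ _
      linarith [excess_eq w]
    have hneg : d * (1 - m / 2) < 0 := mul_neg_of_neg_of_pos hd0 (by linarith)
    linarith
end

section
/- In the F1 setting, for every v ∈ ℝ: (a) if e(v) ≥ 0 then e(v) ≥ ((2 − m)/2)·(F* − v); (b) if e(v) < 0 then e(v) ≥ ((2 + m)/2)·(F* − v). -/
/-- An affine bound `c * (f i - v) ≤ e` with `c > 0` passes to the supremum of `f`. -/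
theorem mul_sSup_range_sub_le {ι : Type*} [Nonempty ι] {f : ι → ℝ} {c v e : ℝ} (hc : 0 < c)
    (h : ∀ i, c * (f i - v) ≤ e) : c * (sSup (Set.range f) - v) ≤ e := by
  have hsup : sSup (Set.range f) ≤ e / c + v := by
    refine csSup_le (Set.range_nonempty f) ?_
    rintro _ ⟨i, rfl⟩
    rw [← sub_le_iff_le_add, le_div_iff₀' hc]
    exact h i
  rwa [← sub_le_iff_le_add, le_div_iff₀' hc] at hsup

/-- In the F1 setting: (a) if `e(v) ≥ 0` then `e(v) ≥ ((2 − m)/2)·(F* − v)`;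
(b) if `e(v) < 0` then `e(v) ≥ ((2 + m)/2)·(F* − v)`. -/
theorem stmt_9 {W : Type*} [Nonempty W] (m : ℝ) (hm : 0 < m) (hm' : m < 2)
    (P N : W → ℝ)
    (hP : ∀ w, 0 ≤ P w ∧ P w < m) (hN : ∀ w, 0 ≤ N w ∧ N w < m)
    (F : W → ℝ) (hF : ∀ w, F w = 2 * P w / (2 + P w - N w))
    (V : W → ℝ → ℝ) (hV : ∀ w v, V w v = (1 - v / 2) * P w + v / 2 * N w)
    (hFb : BddAbove (Set.range F))
    (v : ℝ) (hVb : BddAbove (Set.range fun w => V w v)) :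
    (0 ≤ sSup (Set.range fun w => V w v) - v →
      sSup (Set.range fun w => V w v) - v ≥
        (2 - m) / 2 * (sSup (Set.range F) - v)) ∧
    (sSup (Set.range fun w => V w v) - v < 0 →
      sSup (Set.range fun w => V w v) - v ≥
        (2 + m) / 2 * (sSup (Set.range F) - v)) := by
  have hle : ∀ w, (F w - v) * (1 + (P w - N w) / 2) ≤
      sSup (Set.range fun w => V w v) - v := by
    intro w
    have hden : 2 + P w - N w ≠ 0 := by linarith [(hP w).1, (hN w).2]
    have hfactor : V w v - v = (F w - v) * (1 + (P w - N w) / 2) := by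
      rw [hV, hF]
      field_simp
      ring
    rw [← hfactor]
    exact sub_le_sub_right (le_csSup hVb ⟨w, rfl⟩) v
  refine ⟨fun he => mul_sSup_range_sub_le (by linarith) fun w => ?_,
    fun he => mul_sSup_range_sub_le (by linarith) fun w => ?_⟩
  · have hw := hle w
    obtain hv | hv := le_total (F w) v
    · nlinarith
    · nlinarith [(hP w).1, (hN w).2]
  · have hw := hle w
    have hpos : 0 < 1 + (P w - N w) / 2 := by linarith [(hP w).1, (hN w).2]
    have hneg : F w - v < 0 := by
      by_contra! hv
      linarith [mul_nonneg hv hpos.le]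
    nlinarith [(hP w).2, (hN w).1]
end

section
/- In the F1 setting, let w ∈ W and v ∈ ℝ, and let e = V(w,v) − v. Then: (a) if e ≥ 0, F(w) ≥ v + 2e/(2 + m); (b) if e < 0, F(w) ≥ v + 2e/(2 − m). -/
/-- In the F1 setting, with `e = V(w,v) − v`: (a) if `e ≥ 0` then
`F(w) ≥ v + 2e/(2 + m)`; (b) if `e < 0` then `F(w) ≥ v + 2e/(2 − m)`. -/
theorem stmt_10 {W : Type*} [Nonempty W] (m : ℝ) (hm : 0 < m) (hm' : m < 2)
    (P N : W → ℝ)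
    (hP : ∀ w, 0 ≤ P w ∧ P w < m) (hN : ∀ w, 0 ≤ N w ∧ N w < m)
    (F : W → ℝ) (hF : ∀ w, F w = 2 * P w / (2 + P w - N w))
    (V : W → ℝ → ℝ) (hV : ∀ w v, V w v = (1 - v / 2) * P w + v / 2 * N w)
    (w : W) (v : ℝ) :
    (0 ≤ V w v - v → F w ≥ v + 2 * (V w v - v) / (2 + m)) ∧
    (V w v - v < 0 → F w ≥ v + 2 * (V w v - v) / (2 - m)) := by
  obtain ⟨hP0, hPm⟩ := hP w
  obtain ⟨hN0, hNm⟩ := hN w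
  have hD : 0 < 2 + P w - N w := by linarith
  have key : F w = v + 2 * (V w v - v) / (2 + P w - N w) := by
    rw [hF, hV, div_eq_iff hD.ne', add_mul, div_mul_cancel₀ _ hD.ne']
    ring
  rw [key]
  refine ⟨fun he => ?_, fun he => ?_⟩
  · have : 2 * (V w v - v) / (2 + m) ≤ 2 * (V w v - v) / (2 + P w - N w) :=
      div_le_div_of_nonneg_left (by linarith) hD (by linarith)
    linarith
  · have : 2 * (v - V w v) / (2 + P w - N w) ≤ 2 * (v - V w v) / (2 - m) :=
      div_le_div_of_nonneg_left (by linarith) (by linarith) (by linarith)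
    rw [← neg_sub v (V w v), mul_neg, neg_div, neg_div]
    linarith
end

section
/- (One-step progress of Alternate-Maximization with inexact maximizations, F1-measure.) In the F1 setting, let w₀ ∈ W, let δ ∈ ℝ, set the (inexact) challenge level v = F(w₀) + δ, and suppose w₁ ∈ W satisfies V(w₁, v) = sup_{w ∈ W} V(w, v) − ε for some ε ≥ 0 (inexact maximization of the valuation). Then F* − F(w₁) ≤ (2m/(2 + m))·(F* − F(w₀)) + (2m/(2 − m))·|δ| + (2/(2 − m))·ε. -/
/-- If `(x - v) a ≤ (y - v) b + ε` with weights `a, b ∈ [1 - m/2, 1 + m/2]`, then the gap `x - y`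
is controlled by the positive and negative parts of `x - v` and by `ε`. -/
theorem sub_le_of_weighted_sub_le {m x y v a b ε : ℝ} (hm' : m < 2) (hm : 0 < m)
    (hε : 0 ≤ ε) (ha : 1 - m / 2 ≤ a) (ha' : a ≤ 1 + m / 2)
    (hb : 1 - m / 2 ≤ b) (hb' : b ≤ 1 + m / 2) (h : (x - v) * a ≤ (y - v) * b + ε) :
    x - y ≤ 2 * m / (2 + m) * max (x - v) 0 + 2 * m / (2 - m) * max (v - x) 0
      + 2 / (2 - m) * ε := by
  have hs : 0 < 2 + m := by linarith
  have hd : 0 < 2 - m := by linarith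
  have hb0 : 0 < b := by linarith
  have hc₁ : b - a ≤ 2 * m / (2 + m) * b := by
    rw [div_mul_eq_mul_div, le_div_iff₀ hs]; nlinarith
  have hc₂ : a - b ≤ 2 * m / (2 - m) * b := by
    rw [div_mul_eq_mul_div, le_div_iff₀ hd]; nlinarith
  have hc₃ : 1 ≤ 2 / (2 - m) * b := by
    rw [div_mul_eq_mul_div, le_div_iff₀ hd]; linarith
  have hεb : ε ≤ 2 / (2 - m) * b * ε := le_mul_of_one_le_left hε hc₃
  refine le_of_mul_le_mul_right ?_ hb0
  rcases le_total v x with hx | hx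
  · rw [max_eq_left (sub_nonneg.2 hx), max_eq_right (sub_nonpos.2 hx)]
    have := mul_le_mul_of_nonneg_left hc₁ (sub_nonneg.2 hx)
    linarith
  · rw [max_eq_right (sub_nonpos.2 hx), max_eq_left (sub_nonneg.2 hx)]
    have := mul_le_mul_of_nonneg_left hc₂ (sub_nonneg.2 hx)
    linarith

/-- One-step progress of Alternate-Maximization with inexact maximizations for
the F1-measure: with inexact level `v = F(w₀) + δ` and inexact maximization
`V(w₁,v) = sup_w V(w,v) − ε`, the excess error contracts up to noise terms:
`F* − F(w₁) ≤ (2m/(2+m))·(F* − F(w₀)) + (2m/(2−m))·|δ| + (2/(2−m))·ε`. -/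
theorem stmt_11 {W : Type*} [Nonempty W] (m : ℝ) (hm : 0 < m) (hm' : m < 2)
    (P N : W → ℝ)
    (hP : ∀ w, 0 ≤ P w ∧ P w < m) (hN : ∀ w, 0 ≤ N w ∧ N w < m)
    (F : W → ℝ) (hF : ∀ w, F w = 2 * P w / (2 + P w - N w))
    (V : W → ℝ → ℝ) (hV : ∀ w v, V w v = (1 - v / 2) * P w + v / 2 * N w)
    (hFb : BddAbove (Set.range F))
    (w₀ w₁ : W) (δ ε : ℝ) (hε : 0 ≤ ε) (v : ℝ) (hv : v = F w₀ + δ)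
    (hVb : BddAbove (Set.range fun w => V w v))
    (hmax : V w₁ v = sSup (Set.range fun w => V w v) - ε) :
    sSup (Set.range F) - F w₁ ≤
      2 * m / (2 + m) * (sSup (Set.range F) - F w₀)
        + 2 * m / (2 - m) * |δ| + 2 / (2 - m) * ε := by
  have hs : 0 < 2 + m := by linarith
  have hd : 0 < 2 - m := by linarith
  have hid : ∀ w, V w v - v = (F w - v) * (1 + (P w - N w) / 2) := fun w => by
    have : 2 + P w - N w ≠ 0 := by linarith [hP w, hN w]
    rw [hV, hF]; field_simp; ring
  have hle : ∀ w, F w ≤ sSup (Set.range F) := fun w => le_csSup hFb ⟨w, rfl⟩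
  set S := sSup (Set.range F)
  have hc₁ : 0 ≤ 2 * m / (2 + m) := by positivity
  have hc₂ : 0 ≤ 2 * m / (2 - m) := by positivity
  have hc : 2 * m / (2 + m) ≤ 2 * m / (2 - m) := by gcongr; linarith
  have key : ∀ w, F w - F w₁ ≤ 2 * m / (2 + m) * (S - F w₀) + 2 * m / (2 - m) * |δ|
      + 2 / (2 - m) * ε + 2 * m / (2 - m) * (S - F w) := fun w => by
    have hVw : V w v ≤ sSup (Set.range fun w => V w v) := le_csSup hVb ⟨w, rfl⟩
    have hw : (F w - v) * (1 + (P w - N w) / 2)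
        ≤ (F w₁ - v) * (1 + (P w₁ - N w₁) / 2) + ε := by
      rw [← hid, ← hid]; linarith
    have hgap := sub_le_of_weighted_sub_le hm' hm hε
      (by linarith [hP w, hN w]) (by linarith [hP w, hN w])
      (by linarith [hP w₁, hN w₁]) (by linarith [hP w₁, hN w₁]) hw
    have h₀ := mul_nonneg hc₁ (sub_nonneg.2 (hle w₀))
    have h₁ := mul_nonneg hc₂ (sub_nonneg.2 (hle w))
    rcases le_total v (F w) with hx | hx
    · rw [max_eq_left (sub_nonneg.2 hx), max_eq_right (sub_nonpos.2 hx)] at hgap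
      have h₂ : F w - v ≤ (S - F w₀) + |δ| := by linarith [hle w, neg_le_abs δ]
      have h₃ := mul_le_mul_of_nonneg_left h₂ hc₁
      have h₄ := mul_le_mul_of_nonneg_right hc (abs_nonneg δ)
      linarith
    · rw [max_eq_right (sub_nonpos.2 hx), max_eq_left (sub_nonneg.2 hx)] at hgap
      have h₂ : v - F w ≤ (S - F w) + |δ| := by linarith [hle w₀, le_abs_self δ]
      have h₃ := mul_le_mul_of_nonneg_left h₂ hc₂
      linarith
  have hpos : 0 < 1 + 2 * m / (2 - m) := by positivity
  have hS : S ≤ (F w₁ + 2 * m / (2 + m) * (S - F w₀) + 2 * m / (2 - m) * |δ|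
      + 2 / (2 - m) * ε + 2 * m / (2 - m) * S) / (1 + 2 * m / (2 - m)) := by
    refine csSup_le (Set.range_nonempty F) ?_
    rintro _ ⟨w, rfl⟩
    rw [le_div_iff₀ hpos]
    linarith [key w]
  rw [le_div_iff₀ hpos] at hS
  linarith
end

section
/- (Sufficient dual region of the H-mean.) For all reals u > 0 and v > 0, the infimum of α·u + β·v over the set A = {(α, β) ∈ ℝ² : α ≥ 0, β ≥ 0, √α + √β ≥ √2} equals the harmonic mean 2·u·v/(u + v), and it is attained (at α = 2v²/(u+v)², β = 2u²/(u+v)², which moreover lies in the Euclidean ball of radius 2 around the origin). -/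
/-- Cauchy–Schwarz in Engel form, cleared of denominators. -/
lemma mul_sq_add_le (u v a b : ℝ) :
    u * v * (a + b) ^ 2 ≤ (a ^ 2 * u + b ^ 2 * v) * (u + v) := by
  linarith [sq_nonneg (a * u - b * v)]

lemma sqrt_two_mul_sq_div_sq {s t : ℝ} (hs : 0 ≤ s) (ht : 0 ≤ t) :
    Real.sqrt (2 * s ^ 2 / t ^ 2) = Real.sqrt 2 * s / t := by
  rw [Real.sqrt_div (by positivity), Real.sqrt_mul zero_le_two, Real.sqrt_sq hs, Real.sqrt_sq ht]

/-- Sufficient dual region of the H-mean: for `u, v > 0`, the infimum of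
`α·u + β·v` over `{(α,β) : α ≥ 0, β ≥ 0, √α + √β ≥ √2}` equals the harmonic
mean `2uv/(u+v)`, attained at `α = 2v²/(u+v)², β = 2u²/(u+v)²`, a point lying
in the Euclidean ball of radius 2 around the origin. -/
theorem stmt_14 (u v : ℝ) (hu : 0 < u) (hv : 0 < v) :
    IsLeast {x : ℝ | ∃ α β : ℝ, 0 ≤ α ∧ 0 ≤ β ∧
        Real.sqrt α + Real.sqrt β ≥ Real.sqrt 2 ∧ x = α * u + β * v}
      (2 * u * v / (u + v)) ∧
    (2 * v ^ 2 / (u + v) ^ 2) * u + (2 * u ^ 2 / (u + v) ^ 2) * v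
      = 2 * u * v / (u + v) ∧
    Real.sqrt (2 * v ^ 2 / (u + v) ^ 2) + Real.sqrt (2 * u ^ 2 / (u + v) ^ 2)
      ≥ Real.sqrt 2 ∧
    Real.sqrt ((2 * v ^ 2 / (u + v) ^ 2) ^ 2 + (2 * u ^ 2 / (u + v) ^ 2) ^ 2)
      ≤ 2 := by
  have huv : 0 < u + v := add_pos hu hv
  have value : (2 * v ^ 2 / (u + v) ^ 2) * u + (2 * u ^ 2 / (u + v) ^ 2) * v
      = 2 * u * v / (u + v) := by
    field_simp
    ring
  have feasible : Real.sqrt (2 * v ^ 2 / (u + v) ^ 2) + Real.sqrt (2 * u ^ 2 / (u + v) ^ 2)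
      ≥ Real.sqrt 2 := by
    rw [sqrt_two_mul_sq_div_sq hv.le huv.le, sqrt_two_mul_sq_div_sq hu.le huv.le]
    refine le_of_eq ?_
    field_simp
    ring
  refine ⟨⟨⟨_, _, by positivity, by positivity, feasible, value.symm⟩, ?_⟩, value, feasible, ?_⟩
  · rintro x ⟨α, β, hα, hβ, h, rfl⟩
    have hsq : 2 ≤ (Real.sqrt α + Real.sqrt β) ^ 2 := by
      have := pow_le_pow_left₀ (Real.sqrt_nonneg 2) h 2
      rwa [Real.sq_sqrt zero_le_two] at this
    rw [div_le_iff₀ huv]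
    have key := mul_sq_add_le u v (Real.sqrt α) (Real.sqrt β)
    rw [Real.sq_sqrt hα, Real.sq_sqrt hβ] at key
    linarith [mul_le_mul_of_nonneg_left hsq (mul_pos hu hv).le]
  · have hα : 0 ≤ 2 * v ^ 2 / (u + v) ^ 2 := by positivity
    have hβ : 0 ≤ 2 * u ^ 2 / (u + v) ^ 2 := by positivity
    have hsum : 2 * v ^ 2 / (u + v) ^ 2 + 2 * u ^ 2 / (u + v) ^ 2 ≤ 2 := by
      rw [← add_div, div_le_iff₀ (by positivity)]
      linarith [mul_pos hu hv, add_sq u v]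
    rw [Real.sqrt_le_left zero_le_two]
    nlinarith [mul_nonneg hα hβ]
end

section
/- (Stability of the H-mean.) For all reals u > 0, v > 0 and every ε ≥ 0, 2·(u+ε)·(v+ε)/((u+ε) + (v+ε)) ≤ 2·u·v/(u+v) + 4·ε. That is, the H-mean link function Ψ(u,v) = 2uv/(u+v) is δ-stable with δ(ε) = 4ε. -/
/-- Stability of the H-mean: `Ψ(u+ε, v+ε) ≤ Ψ(u,v) + 4ε` for
`Ψ(u,v) = 2uv/(u+v)`, `u, v > 0`, `ε ≥ 0`. -/
theorem stmt_16 (u v ε : ℝ) (hu : 0 < u) (hv : 0 < v) (hε : 0 ≤ ε) :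
    2 * (u + ε) * (v + ε) / ((u + ε) + (v + ε)) ≤ 2 * u * v / (u + v) + 4 * ε := by
  have hs : 0 < u + v := by positivity
  have hgap : 0 ≤ 4 * u * v * ε + 2 * ε * (u + v) ^ 2 + 6 * ε ^ 2 * (u + v) := by positivity
  rw [div_add' _ _ _ hs.ne', div_le_div_iff₀ (by positivity) hs]
  linarith
end

section
/- (Stability of the G-mean.) For all reals u, v with 0 ≤ u ≤ 1 and 0 ≤ v ≤ 1, and every ε with 0 ≤ ε ≤ 1, √((u+ε)·(v+ε)) ≤ √(u·v) + 3·√ε. That is, on [0,1]², the G-mean link function Ψ(u,v) = √(uv) is δ-stable with δ(ε) = 3√ε. -/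
/-- Stability of the G-mean on `[0,1]²`:
`√((u+ε)(v+ε)) ≤ √(uv) + 3√ε` for `u, v ∈ [0,1]` and `ε ∈ [0,1]`. -/
theorem stmt_17 (u v ε : ℝ) (hu : 0 ≤ u) (hu1 : u ≤ 1) (hv : 0 ≤ v)
    (hv1 : v ≤ 1) (hε : 0 ≤ ε) (hε1 : ε ≤ 1) :
    Real.sqrt ((u + ε) * (v + ε)) ≤ Real.sqrt (u * v) + 3 * Real.sqrt ε := by
  have hs : 0 ≤ Real.sqrt (u * v) * Real.sqrt ε := by positivity
  have hbound : ε * (u + v + ε) ≤ ε * 3 := by gcongr; linarith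
  apply Real.sqrt_le_iff.mpr
  refine ⟨by positivity, ?_⟩
  nlinarith [Real.sq_sqrt hε, Real.sq_sqrt (mul_nonneg hu hv)]
end

section
/- (Alt-Max contraction rate for the Jaccard coefficient.) Let W be a nonempty set, let θ > 0 be a real, let 0 < m < (1 + θ)/θ, and let P, N : W → ℝ satisfy 0 ≤ P(w) ≤ m and 0 ≤ N(w) ≤ m for all w. Define the Jaccard measure J(w) = P(w) / (1 + θ − θ·N(w)) (whose denominator is positive under these conditions) and the valuation V(w,v) = (1/(1+θ))·P(w) + (v·θ/(1+θ))·N(w). Assume J is bounded above with J* = sup_{w∈W} J(w). If w₀, w₁ ∈ W satisfy v = J(w₀) and V(w₁, v) = sup_{w ∈ W} V(w, v), then J* − J(w₁) ≤ [m·θ/(1 + θ)] · (J* − J(w₀)). -/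
/-- Alt-Max contraction rate for the Jaccard coefficient: one exact
alternate-maximization step contracts the excess error by `mθ/(1+θ)`. -/
theorem stmt_19 {W : Type*} [Nonempty W] (θ m : ℝ)
    (hθ : 0 < θ) (hm : 0 < m) (hm' : m < (1 + θ) / θ)
    (P N : W → ℝ)
    (hP : ∀ w, 0 ≤ P w ∧ P w ≤ m) (hN : ∀ w, 0 ≤ N w ∧ N w ≤ m)
    (J : W → ℝ) (hJ : ∀ w, J w = P w / (1 + θ - θ * N w))
    (V : W → ℝ → ℝ)
    (hV : ∀ w v, V w v = 1 / (1 + θ) * P w + v * θ / (1 + θ) * N w)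
    (hJb : BddAbove (Set.range J))
    (w₀ w₁ : W) (v : ℝ) (hv : v = J w₀)
    (hVb : BddAbove (Set.range fun w => V w v))
    (hmax : V w₁ v = sSup (Set.range fun w => V w v)) :
    sSup (Set.range J) - J w₁ ≤ m * θ / (1 + θ) * (sSup (Set.range J) - J w₀) := by
  have hθ1 : 0 < 1 + θ := by linarith
  have hmθ : 0 < 1 + θ - m * θ := by
    have := (lt_div_iff₀ hθ).1 hm'
    linarith
  have hD_lower : ∀ w, 1 + θ - m * θ ≤ 1 + θ - θ * N w := fun w => by
    nlinarith [mul_le_mul_of_nonneg_left (hN w).2 hθ.le]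
  have hD_upper : ∀ w, 1 + θ - θ * N w ≤ 1 + θ := fun w => by
    nlinarith [mul_nonneg hθ.le (hN w).1]
  have hV_sub : ∀ w, (1 + θ) * (V w v - v) = (1 + θ - θ * N w) * (J w - v) := fun w => by
    have hD : 1 + θ - θ * N w ≠ 0 := (hmθ.trans_le (hD_lower w)).ne'
    have hPJ : (1 + θ - θ * N w) * J w = P w := by rw [hJ, mul_div_cancel₀ _ hD]
    rw [mul_sub _ (J w), hPJ, hV]
    field_simp
    ring
  have hgain : ∀ w, (1 + θ - θ * N w) * (J w - v) ≤ (1 + θ - θ * N w₁) * (J w₁ - v) := fun w => by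
    have hVw : V w v ≤ V w₁ v := hmax ▸ le_csSup hVb ⟨w, rfl⟩
    rw [← hV_sub, ← hV_sub]
    gcongr
  have hJ₁ : 0 ≤ J w₁ - v := by
    have h := hgain w₀
    rw [← hv, sub_self, mul_zero] at h
    exact nonneg_of_mul_nonneg_right h (hmθ.trans_le (hD_lower w₁))
  have hstep : ∀ w, (1 + θ - m * θ) * (J w - v) ≤ (1 + θ) * (J w₁ - v) := fun w => by
    rcases le_total 0 (J w - v) with h | h
    · exact (mul_le_mul_of_nonneg_right (hD_lower w) h).trans
        ((hgain w).trans (mul_le_mul_of_nonneg_right (hD_upper w₁) hJ₁))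
    · exact (mul_nonpos_of_nonneg_of_nonpos hmθ.le h).trans (mul_nonneg hθ1.le hJ₁)
  have hsup : sSup (Set.range J) ≤ v + (1 + θ) * (J w₁ - v) / (1 + θ - m * θ) := by
    refine csSup_le (Set.range_nonempty J) ?_
    rintro _ ⟨w, rfl⟩
    rw [← sub_le_iff_le_add', le_div_iff₀' hmθ]
    exact hstep w
  rw [← sub_le_iff_le_add', le_div_iff₀' hmθ] at hsup
  rw [← hv, div_mul_eq_mul_div, le_div_iff₀ hθ1]
  linarith
end
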